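/- arXiv:2309.08093 — 2 statements merged into one kernel-verified Lean document; each statement's English description precedes it below -/
import Mathlib

section
/- Let $S_k \in \mathbb{R}^{m \times n_k}$, $k = 1, \ldots, d$, be CountSketch matrices with hash maps $h_k$ and sign vectors $v_k$, and let $S \in \mathbb{R}^{m \times n_1 n_2 \cdots n_d}$ be the TensorSketch matrix generated by $S_1, \ldots, S_d$ (hash map $h(i_1,\ldots,i_d) = ((\sum_{k=1}^d (h_k(i_k)-1)) \bmod m)+1$, sign $v(i_1,\ldots,i_d) = \prod_{k=1}^d v_k(i_k)$). Then $S = F^{-1}\,[(F S_d) \square (F S_{d-1}) \square \cdots \square (F S_1)]$, where $F \in \mathbb{C}^{m \times m}$ is the discrete Fourier transform matrix; equivalently, $(FS)(s, i) = \prod_{k=1}^d (F S_k)(s, i_k)$ for all $s \in [m]$ and all multi-indices $(i_1,\ldots,i_d)$. -/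
open Matrix Complex

noncomputable def dft (m : ℕ) : Matrix (Fin m) (Fin m) ℂ :=
  Matrix.of fun s t : Fin m =>
    Complex.exp (-2 * Real.pi * Complex.I * ((s : ℕ) : ℂ) * ((t : ℕ) : ℂ) / (m : ℂ))

def countSketch {m : ℕ} {ι : Type*} (h : ι → Fin m) (v : ι → ℝ) :
    Matrix (Fin m) ι ℝ :=
  Matrix.of fun j i => if h i = j then v i else 0

def faceSplit {μ n₁ n₂ α : Type*} [Mul α] (D : Matrix μ n₂ α) (C : Matrix μ n₁ α) :
    Matrix μ (n₁ × n₂) α :=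
  Matrix.of fun s i => D s i.2 * C s i.1

def hashPair {m : ℕ} [NeZero m] {ι₁ ι₂ : Type*} (h₁ : ι₁ → Fin m) (h₂ : ι₂ → Fin m) :
    ι₁ × ι₂ → Fin m :=
  fun i => ⟨((h₁ i.1 : ℕ) + (h₂ i.2 : ℕ)) % m, Nat.mod_lt _ (Nat.pos_of_ne_zero (NeZero.ne m))⟩

def hashFam {m : ℕ} [NeZero m] {q : ℕ} {n : Fin q → ℕ} (h : ∀ k, Fin (n k) → Fin m) :
    (∀ k, Fin (n k)) → Fin m :=
  fun i => ⟨(∑ k, (h k (i k) : ℕ)) % m, Nat.mod_lt _ (Nat.pos_of_ne_zero (NeZero.ne m))⟩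

def ttChain (r n : ℕ → ℕ) {α : Type*} [Semiring α]
    (G : (j : ℕ) → Fin (n j) → Matrix (Fin (r j)) (Fin (r (j + 1))) α) :
    (p : ℕ) → ((j : Fin p) → Fin (n j)) → Matrix (Fin (r 0)) (Fin (r p)) α
  | 0, _ => 1
  | p + 1, i => ttChain r n G p (fun j => i j.castSucc) * G p (i (Fin.last p))

theorem dft_apply_pow (m : ℕ) (s t : Fin m) :
    dft m s t = ((Complex.exp (2 * Real.pi * Complex.I / (m : ℂ)))⁻¹ ^ (s : ℕ)) ^ (t : ℕ) := by
  rw [← Complex.exp_neg, ← Complex.exp_nat_mul, ← Complex.exp_nat_mul]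
  simp only [dft, Matrix.of_apply]
  congr 1
  ring

theorem dft_isUnit_det (m : ℕ) [NeZero m] : IsUnit (dft m).det := by
  have hV : dft m = Matrix.vandermonde
      (fun s : Fin m => (Complex.exp (2 * Real.pi * Complex.I / (m : ℂ)))⁻¹ ^ (s : ℕ)) := by
    ext s t
    rw [dft_apply_pow, Matrix.vandermonde_apply]
  rw [hV, isUnit_iff_ne_zero, Matrix.det_vandermonde_ne_zero_iff]
  intro a b hab
  exact Fin.ext ((Complex.isPrimitiveRoot_exp m (NeZero.ne m)).inv.pow_inj a.2 b.2 hab)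

theorem dft_mul_countSketch {m : ℕ} {ι : Type*} (h : ι → Fin m) (v : ι → ℝ)
    (s : Fin m) (i : ι) :
    (dft m * (countSketch h v).map Complex.ofReal) s i = dft m s (h i) * (v i : ℂ) := by
  rw [Matrix.mul_apply, Finset.sum_eq_single (h i)]
  · simp [countSketch]
  · intro b _ hb
    simp [countSketch, hb.symm]
  · simp

theorem dft_hashFam {m d : ℕ} [NeZero m] {n : Fin d → ℕ}
    (h : ∀ k, Fin (n k) → Fin m) (s : Fin m) (i : ∀ k, Fin (n k)) :
    dft m s (hashFam h i) = ∏ k, dft m s (h k (i k)) := by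
  have hz := (Complex.isPrimitiveRoot_exp m (NeZero.ne m)).inv.pow_eq_one
  simp only [dft_apply_pow, Finset.prod_pow_eq_pow_sum]
  refine (pow_eq_pow_mod _ ?_).symm
  rw [pow_right_comm, hz, one_pow]

/-- Corollary 3.2: the TensorSketch matrix generated by `d` CountSketch
matrices satisfies `S = F⁻¹ [(F S_d) □ ⋯ □ (F S₁)]` (the iterated face-splitting product is
the matrix whose `(s,i)` entry is `∏ k, (F S_k)(s, i_k)`), equivalently
`(F S)(s, i) = ∏ k, (F S_k)(s, i_k)`. -/
theorem tensorSketch_eq_invDFT_faceSplit_chain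
    {m d : ℕ} [NeZero m] {n : Fin d → ℕ}
    (h : ∀ k, Fin (n k) → Fin m) (v : ∀ k, Fin (n k) → ℝ)
    (hv : ∀ k i, v k i = 1 ∨ v k i = -1)
    (S : Matrix (Fin m) (∀ k, Fin (n k)) ℝ)
    (hS : S = countSketch (hashFam h) (fun i => ∏ k, v k (i k))) :
    S.map Complex.ofReal =
      (dft m)⁻¹ *
        Matrix.of (fun (s : Fin m) (i : ∀ k, Fin (n k)) =>
          ∏ k, (dft m * (countSketch (h k) (v k)).map Complex.ofReal) s (i k)) ∧
    ∀ (s : Fin m) (i : ∀ k, Fin (n k)),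
      (dft m * S.map Complex.ofReal) s i =
        ∏ k, (dft m * (countSketch (h k) (v k)).map Complex.ofReal) s (i k) := by
  have key : ∀ (s : Fin m) (i : ∀ k, Fin (n k)),
      (dft m * S.map Complex.ofReal) s i =
        ∏ k, (dft m * (countSketch (h k) (v k)).map Complex.ofReal) s (i k) := by
    intro s i
    subst hS
    simp only [dft_mul_countSketch, dft_hashFam, Finset.prod_mul_distrib, Complex.ofReal_prod]
  refine ⟨?_, key⟩
  have hM : Matrix.of (fun (s : Fin m) (i : ∀ k, Fin (n k)) =>
      ∏ k, (dft m * (countSketch (h k) (v k)).map Complex.ofReal) s (i k)) =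
      dft m * S.map Complex.ofReal := by
    ext s i
    exact (key s i).symm
  rw [hM, Matrix.nonsing_inv_mul_cancel_left _ _ (dft_isUnit_det m)]
end

section
/- (TensorSketch for least squares.) Let $P \in \mathbb{R}^{n_1 n_2 \cdots n_q \times s}$ have full column rank with $n_1 n_2 \cdots n_q > s$, let $B \in \mathbb{R}^{n_1 n_2 \cdots n_q \times n}$, and let $S \in \mathbb{R}^{m \times n_1 n_2 \cdots n_q}$ be a random TensorSketch matrix generated by mutually independent 3-wise independent hash maps and mutually independent 4-wise independent sign functions. Let $X_{opt} = \arg\min_X \|PX - B\|_F$, let $\tilde{X}_{opt}$ be any minimizer of $\|SPX - SB\|_F$, and let $B^{\perp} = P X_{opt} - B$. If $m = \max\{8 s^2 (2+3^q)/\delta,\; 8 s (2+3^q)/(\epsilon \delta)\}$, then with probability at least $1 - \delta$, $\|P \tilde{X}_{opt} - B\|_F^2 \le (1 + \epsilon)\,\|B^{\perp}\|_F^2$. -/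
open Matrix MeasureTheory

/-- The TensorSketch matrix generated by hash maps `h k` and sign functions `v k`:
the CountSketch-type matrix with hash map `hashFam h` and sign `i ↦ ∏ k, v k (i k)`. -/
def tsMat {m q : ℕ} [NeZero m] {n : Fin q → ℕ}
    (h : ∀ k, Fin (n k) → Fin m) (v : ∀ k, Fin (n k) → ℝ) :
    Matrix (Fin m) (∀ k, Fin (n k)) ℝ :=
  countSketch (hashFam h) (fun i => ∏ k, v k (i k))

/-- The squared Frobenius norm of a real matrix. -/
def frobSq {α β : Type*} [Fintype α] [Fintype β] (A : Matrix α β ℝ) : ℝ :=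
  ∑ i, ∑ j, A i j ^ 2

/-- A random hash map `h : Ω → ι → Fin m` is `k`-wise independent: each value `h(i)` is
uniformly distributed on `[m]`, and any at most `k` values at distinct indices are mutually
independent (their joint distribution factorizes). -/
def KWiseIndepHash {Ω : Type*} [MeasurableSpace Ω] (μ : Measure Ω) (k : ℕ)
    {ι : Type*} {m : ℕ} (h : Ω → ι → Fin m) : Prop :=
  (∀ (i : ι) (j : Fin m), μ {ω | h ω i = j} = 1 / (m : ENNReal)) ∧
  ∀ t : Finset ι, t.card ≤ k → ∀ j : ι → Fin m,
    μ {ω | ∀ i ∈ t, h ω i = j i} = ∏ i ∈ t, μ {ω | h ω i = j i}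

/-- A random sign function `v : Ω → ι → ℝ` is `k`-wise independent: it takes values in
`{-1, 1}`, each value is uniform on `{-1, 1}`, and any at most `k` values at distinct
indices are mutually independent. -/
def KWiseIndepSign {Ω : Type*} [MeasurableSpace Ω] (μ : Measure Ω) (k : ℕ)
    {ι : Type*} (v : Ω → ι → ℝ) : Prop :=
  (∀ ω i, v ω i = 1 ∨ v ω i = -1) ∧
  (∀ (i : ι) (x : ℝ), x = 1 ∨ x = -1 → μ {ω | v ω i = x} = 1 / 2) ∧
  ∀ t : Finset ι, t.card ≤ k → ∀ x : ι → ℝ,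
    μ {ω | ∀ i ∈ t, v ω i = x i} = ∏ i ∈ t, μ {ω | v ω i = x i}

/-- The random hash maps `H k` and random sign functions `V k` are all mutually independent
(as finitely-valued random variables, their joint distribution factorizes). -/
def IndepHashSigns {Ω : Type*} [MeasurableSpace Ω] (μ : Measure Ω)
    {κ : Type*} [Fintype κ] {n : κ → ℕ} {m : ℕ}
    (H : ∀ k, Ω → Fin (n k) → Fin m) (V : ∀ k, Ω → Fin (n k) → ℝ) : Prop :=
  ∀ (g : ∀ k, Fin (n k) → Fin m) (w : ∀ k, Fin (n k) → ℝ),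
    μ {ω | (∀ k, H k ω = g k) ∧ (∀ k, V k ω = w k)} =
      (∏ k, μ {ω | H k ω = g k}) * ∏ k, μ {ω | V k ω = w k}



/-- Indicator that four indices are paired up. -/
def wPair {α : Type*} [DecidableEq α] (a b c d : α) : ℝ :=
  if (a = b ∧ c = d) ∨ (a = c ∧ b = d) ∨ (a = d ∧ b = c) then 1 else 0

lemma wPair_nonneg {α : Type*} [DecidableEq α] (a b c d : α) : 0 ≤ wPair a b c d := by
  unfold wPair; split_ifs <;> norm_num

lemma wPair_le {α : Type*} [DecidableEq α] (a b c d : α) :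
    wPair a b c d ≤ (if a = b then 1 else 0) * (if c = d then 1 else 0)
      + (if a = c then 1 else 0) * (if b = d then 1 else 0)
      + (if a = d then 1 else 0) * (if b = c then 1 else 0) := by
  unfold wPair
  split_ifs <;> simp_all

lemma quad_base {α : Type*} [Fintype α] [DecidableEq α] (f g k l : α → ℝ)
    (hf : ∀ a, 0 ≤ f a) (hg : ∀ a, 0 ≤ g a) (hk : ∀ a, 0 ≤ k a) (hl : ∀ a, 0 ≤ l a) :
    ∑ a, ∑ b, ∑ c, ∑ d, wPair a b c d * (f a * g b * k c * l d) ≤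
      3 * (√(∑ a, f a ^ 2) * √(∑ a, g a ^ 2) * √(∑ a, k a ^ 2) * √(∑ a, l a ^ 2)) := by
  have cs : ∀ x y : α → ℝ, ∑ a, x a * y a ≤ √(∑ a, x a ^ 2) * √(∑ a, y a ^ 2) := fun x y =>
    Real.sum_mul_le_sqrt_mul_sqrt _ _ _
  have h1 : ∑ a, ∑ b, ∑ c, ∑ d, wPair a b c d * (f a * g b * k c * l d) ≤
      ∑ a, ∑ b, ∑ c, ∑ d, ((if a = b then 1 else 0) * (if c = d then 1 else 0)
      + (if a = c then 1 else 0) * (if b = d then 1 else 0)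
      + (if a = d then 1 else 0) * (if b = c then 1 else 0)) * (f a * g b * k c * l d) := by
    refine Finset.sum_le_sum fun a _ => Finset.sum_le_sum fun b _ => Finset.sum_le_sum fun c _ =>
      Finset.sum_le_sum fun d _ => ?_
    have := hf a
    have := hg b
    have := hk c
    have := hl d
    exact mul_le_mul_of_nonneg_right (wPair_le a b c d) (by positivity)
  have e1 : ∑ a, ∑ b, ∑ c, ∑ d, ((if a = b then 1 else 0) * (if c = d then 1 else 0)
      + (if a = c then 1 else 0) * (if b = d then 1 else 0)
      + (if a = d then 1 else 0) * (if b = c then 1 else 0)) * (f a * g b * k c * l d)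
      = (∑ a, f a * g a) * (∑ a, k a * l a) + (∑ a, f a * k a) * (∑ a, g a * l a)
        + (∑ a, f a * l a) * (∑ a, g a * k a) := by
    simp only [add_mul, Finset.sum_add_distrib, Finset.sum_mul_sum]
    congr 1
    · congr 1
      · simp [ite_mul, ← Finset.mul_sum, mul_assoc]
      · simp [ite_mul, ← Finset.mul_sum]
        refine Finset.sum_congr rfl fun a _ => ?_
        rw [Finset.mul_sum]
        refine Finset.sum_congr rfl fun b _ => by ring
    · simp [ite_mul, ← Finset.mul_sum]
      refine Finset.sum_congr rfl fun a _ => ?_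
      rw [Finset.mul_sum]
      refine Finset.sum_congr rfl fun b _ => by ring
  have p : ∀ x y : α → ℝ, (∀ a, 0 ≤ x a) → (∀ a, 0 ≤ y a) → 0 ≤ ∑ a, x a * y a :=
    fun x y hx hy => Finset.sum_nonneg fun a _ => mul_nonneg (hx a) (hy a)
  have t1 := mul_le_mul (cs f g) (cs k l) (p k l hk hl) (by positivity)
  have t2 := mul_le_mul (cs f k) (cs g l) (p g l hg hl) (by positivity)
  have t3 := mul_le_mul (cs f l) (cs g k) (p g k hg hk) (by positivity)
  rw [e1] at h1
  nlinarith

lemma sum_cons {q : ℕ} {β : Fin (q + 1) → Type*} [∀ k, Fintype (β k)]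
    (f : (∀ k, β k) → ℝ) :
    ∑ x, f x = ∑ a : β 0, ∑ y : (∀ k : Fin q, β k.succ), f (Fin.cons a y) := by
  rw [← Fintype.sum_prod_type', ← (Fin.consEquiv β).sum_comp]
  rfl

lemma quad (q : ℕ) : ∀ (n : Fin q → ℕ) (F G K L : (∀ k, Fin (n k)) → ℝ),
    (∀ i, 0 ≤ F i) → (∀ i, 0 ≤ G i) → (∀ i, 0 ≤ K i) → (∀ i, 0 ≤ L i) →
    ∑ i, ∑ j, ∑ k, ∑ l, (∏ t, wPair (i t) (j t) (k t) (l t)) * (F i * G j * K k * L l) ≤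
      3 ^ q * (√(∑ i, F i ^ 2) * √(∑ i, G i ^ 2) * √(∑ i, K i ^ 2) * √(∑ i, L i ^ 2)) := by
  induction q with
  | zero =>
    intro n F G K L hF hG hK hL
    simp [Real.sqrt_sq, hF, hG, hK, hL]
  | succ q ih =>
    intro n F G K L hF hG hK hL
    have hb := quad_base (fun a => √(∑ y, F (Fin.cons a y) ^ 2)) (fun a => √(∑ y, G (Fin.cons a y) ^ 2))
      (fun a => √(∑ y, K (Fin.cons a y) ^ 2)) (fun a => √(∑ y, L (Fin.cons a y) ^ 2))
      (fun _ => Real.sqrt_nonneg _) (fun _ => Real.sqrt_nonneg _)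
      (fun _ => Real.sqrt_nonneg _) (fun _ => Real.sqrt_nonneg _)
    have hs : ∀ F : (∀ k, Fin (n k)) → ℝ, ∑ a : Fin (n 0), √(∑ y : (∀ k : Fin q, Fin (n k.succ)), F (Fin.cons a y) ^ 2) ^ 2 = ∑ i, F i ^ 2 := by
      intro F
      rw [sum_cons (β := fun k => Fin (n k))]
      refine Finset.sum_congr rfl fun a _ => Real.sq_sqrt (by positivity)
    rw [hs F, hs G, hs K, hs L] at hb
    have hstep : ∑ i, ∑ j, ∑ k, ∑ l, (∏ t, wPair (i t) (j t) (k t) (l t)) * (F i * G j * K k * L l)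
        = ∑ a, ∑ b, ∑ c, ∑ d, wPair a b c d *
          ∑ i : (∀ k : Fin q, Fin (n k.succ)), ∑ j : (∀ k : Fin q, Fin (n k.succ)), ∑ k : (∀ k : Fin q, Fin (n k.succ)), ∑ l : (∀ k : Fin q, Fin (n k.succ)),
            (∏ t, wPair (i t) (j t) (k t) (l t)) *
            (F (Fin.cons a i) * G (Fin.cons b j) * K (Fin.cons c k) * L (Fin.cons d l)) := by
      rw [sum_cons (β := fun k => Fin (n k))]
      refine Finset.sum_congr rfl fun a _ => ?_
      simp only [sum_cons (β := fun k => Fin (n k)), Fin.prod_univ_succ, Fin.cons_zero, Fin.cons_succ]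
      rw [Finset.sum_comm]
      refine Finset.sum_congr rfl fun b _ => ?_
      simp only [Finset.mul_sum]
      -- i, j, c, k, d, l → c, d, i, j, k, l
      have s1 : ∀ f : (∀ k : Fin q, Fin (n k.succ)) → (∀ k : Fin q, Fin (n k.succ)) → Fin (n 0) →
          (∀ k : Fin q, Fin (n k.succ)) → Fin (n 0) → (∀ k : Fin q, Fin (n k.succ)) → ℝ,
          ∑ i, ∑ j, ∑ c, ∑ k, ∑ d, ∑ l, f i j c k d l = ∑ c, ∑ d, ∑ i, ∑ j, ∑ k, ∑ l, f i j c k d l := by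
        intro f
        calc _ = ∑ i, ∑ c, ∑ j, ∑ d, ∑ k, ∑ l, f i j c k d l := by
              refine Finset.sum_congr rfl fun i _ => ?_
              rw [Finset.sum_comm]
              refine Finset.sum_congr rfl fun c _ => ?_
              refine Finset.sum_congr rfl fun j _ => ?_
              rw [Finset.sum_comm]
          _ = ∑ c, ∑ i, ∑ d, ∑ j, ∑ k, ∑ l, f i j c k d l := by
              rw [Finset.sum_comm]
              refine Finset.sum_congr rfl fun c _ => ?_
              refine Finset.sum_congr rfl fun i _ => ?_
              rw [Finset.sum_comm]
          _ = _ := by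
              refine Finset.sum_congr rfl fun c _ => ?_
              rw [Finset.sum_comm]
      rw [s1]
      simp only [mul_assoc]
    rw [hstep]
    calc _ ≤ ∑ a, ∑ b, ∑ c, ∑ d, wPair a b c d * (3 ^ q * (√(∑ y, F (Fin.cons a y) ^ 2) *
          √(∑ y, G (Fin.cons b y) ^ 2) * √(∑ y, K (Fin.cons c y) ^ 2) * √(∑ y, L (Fin.cons d y) ^ 2))) := by
          refine Finset.sum_le_sum fun a _ => Finset.sum_le_sum fun b _ => Finset.sum_le_sum fun c _ =>
            Finset.sum_le_sum fun d _ => ?_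
          exact mul_le_mul_of_nonneg_left (ih (fun k => n k.succ) (fun i => F (Fin.cons a i))
            (fun i => G (Fin.cons b i)) (fun i => K (Fin.cons c i)) (fun i => L (Fin.cons d i))
            (fun _ => hF _) (fun _ => hG _) (fun _ => hK _) (fun _ => hL _)) (wPair_nonneg _ _ _ _)
      _ = 3 ^ q * ∑ a, ∑ b, ∑ c, ∑ d, wPair a b c d * ((√(∑ y, F (Fin.cons a y) ^ 2) *
          √(∑ y, G (Fin.cons b y) ^ 2) * √(∑ y, K (Fin.cons c y) ^ 2) * √(∑ y, L (Fin.cons d y) ^ 2))) := by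
          simp only [Finset.mul_sum]
          refine Finset.sum_congr rfl fun a _ => Finset.sum_congr rfl fun b _ => Finset.sum_congr rfl fun c _ =>
            Finset.sum_congr rfl fun d _ => ?_
          ring
      _ ≤ _ := by
          rw [pow_succ, mul_assoc]
          exact mul_le_mul_of_nonneg_left hb (by positivity)

lemma isUnit_of_rank {s : ℕ} (A : Matrix (Fin s) (Fin s) ℝ) (h : A.rank = s) : IsUnit A := by
  rw [← Matrix.mulVec_surjective_iff_isUnit]
  have h2 : LinearMap.range A.mulVecLin = ⊤ := by
    apply Submodule.eq_top_of_finrank_eq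
    rw [← Matrix.rank, h]; simp
  exact LinearMap.range_eq_top.mp h2

lemma exists_orth {ι : Type*} [Fintype ι] {s : ℕ} (P : Matrix ι (Fin s) ℝ) (h : P.rank = s) :
    ∃ (U : Matrix ι (Fin s) ℝ) (R R' : Matrix (Fin s) (Fin s) ℝ), Uᵀ * U = 1 ∧ P = U * R ∧ U = P * R' := by
  have hps := Matrix.posSemidef_conjTranspose_mul_self P
  obtain ⟨C, hC⟩ : ∃ C : Matrix (Fin s) (Fin s) ℝ, Pᵀ * P = Cᵀ * C := by
    open scoped MatrixOrder in
    obtain ⟨C, hC⟩ := CStarAlgebra.nonneg_iff_eq_star_mul_self.mp hps.nonneg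
    refine ⟨C, ?_⟩
    simpa [Matrix.star_eq_conjTranspose, Matrix.conjTranspose_eq_transpose_of_trivial] using hC
  have hu : IsUnit (Cᵀ * C) := by
    rw [← hC]; apply isUnit_of_rank; rw [Matrix.rank_transpose_mul_self, h]
  have hCu : IsUnit C.det := by
    rw [Matrix.isUnit_iff_isUnit_det, Matrix.det_mul] at hu
    exact isUnit_of_mul_isUnit_right hu
  have hCu' : IsUnit Cᵀ.det := by rwa [Matrix.det_transpose]
  refine ⟨P * C⁻¹, C, C⁻¹, ?_, ?_, rfl⟩
  · rw [Matrix.transpose_mul, Matrix.transpose_nonsing_inv, Matrix.mul_assoc, ← Matrix.mul_assoc Pᵀ, hC,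
      Matrix.mul_assoc, Matrix.mul_nonsing_inv _ hCu, Matrix.mul_one, Matrix.nonsing_inv_mul _ hCu']
  · rw [Matrix.mul_assoc, Matrix.nonsing_inv_mul _ hCu, Matrix.mul_one]

lemma frobSq_nonneg {α β : Type*} [Fintype α] [Fintype β] (A : Matrix α β ℝ) : 0 ≤ frobSq A :=
  Finset.sum_nonneg fun _ _ => Finset.sum_nonneg fun _ _ => sq_nonneg _

lemma frobSq_eq_trace {α β : Type*} [Fintype α] [Fintype β] (A : Matrix α β ℝ) :
    frobSq A = (Aᵀ * A).trace := by
  simp only [frobSq, Matrix.trace, Matrix.diag, Matrix.mul_apply, Matrix.transpose_apply]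
  rw [Finset.sum_comm]
  simp only [sq]

lemma frobSq_eq_zero {α β : Type*} [Fintype α] [Fintype β] (A : Matrix α β ℝ) (h : frobSq A = 0) :
    A = 0 := by
  ext i j
  have h1 := (Finset.sum_eq_zero_iff_of_nonneg
    (fun i _ => Finset.sum_nonneg fun _ _ => sq_nonneg _)).mp h i (Finset.mem_univ i)
  have h2 := (Finset.sum_eq_zero_iff_of_nonneg (fun j _ => sq_nonneg _)).mp h1 j (Finset.mem_univ j)
  simpa using h2

lemma frobSq_add {α β : Type*} [Fintype α] [Fintype β] (A B : Matrix α β ℝ) :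
    frobSq (A + B) = frobSq A + 2 * (Aᵀ * B).trace + frobSq B := by
  have : (Bᵀ * A).trace = (Aᵀ * B).trace := by
    rw [← Matrix.trace_transpose, Matrix.transpose_mul, Matrix.transpose_transpose]
  simp only [frobSq_eq_trace, Matrix.transpose_add, Matrix.add_mul, Matrix.mul_add, Matrix.trace_add, this]
  ring

lemma normal_eq {α β γ : Type*} [Fintype α] [Fintype β] [Fintype γ] (P : Matrix α β ℝ)
    (B : Matrix α γ ℝ) (X : Matrix β γ ℝ) (hX : ∀ Y : Matrix β γ ℝ, frobSq (P * X - B) ≤ frobSq (P * Y - B)) :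
    Pᵀ * (P * X - B) = 0 := by
  set M := P * X - B with hM
  set D := Pᵀ * M with hD
  apply frobSq_eq_zero
  have key : ∀ t : ℝ, 0 ≤ 2 * t * frobSq D + t ^ 2 * frobSq (P * D) := by
    intro t
    have h := hX (X + t • D)
    have e : P * (X + t • D) - B = t • (P * D) + M := by
      rw [Matrix.mul_add, hM, Matrix.mul_smul]; abel
    have e2 : ((t • (P * D))ᵀ * M).trace = t * frobSq D := by
      rw [frobSq_eq_trace, Matrix.transpose_smul, Matrix.smul_mul, Matrix.trace_smul, Matrix.transpose_mul,
        Matrix.mul_assoc, ← hD, smul_eq_mul]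
    have e3 : frobSq (t • (P * D)) = t ^ 2 * frobSq (P * D) := by
      simp only [frobSq, Matrix.smul_apply, smul_eq_mul, mul_pow, Finset.mul_sum]
    rw [e, frobSq_add, e2, e3] at h
    linarith
  have h0 := frobSq_nonneg D
  have h1 := frobSq_nonneg (P * D)
  by_contra hne
  have hpos : 0 < frobSq D := lt_of_le_of_ne h0 (Ne.symm hne)
  have h2 := key (-(frobSq D / (frobSq (P * D) + 1)))
  have h3 : 0 < frobSq (P * D) + 1 := by linarith
  set x := frobSq D / (frobSq (P * D) + 1) with hx
  have hxp : 0 < x := by positivity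
  have hx2 : x * (frobSq (P * D) + 1) = frobSq D := by rw [hx]; field_simp
  nlinarith

section
attribute [local instance] Matrix.frobeniusNormedAddCommGroup

lemma frobSq_eq_norm {α β : Type*} [Fintype α] [Fintype β] (A : Matrix α β ℝ) :
    frobSq A = ‖A‖ ^ 2 := by
  rw [Matrix.frobenius_norm_def, ← Real.rpow_natCast, ← Real.rpow_mul (by positivity)]
  simp [frobSq]

lemma det_part {ι : Type*} [Fintype ι] {m s nc : ℕ} [DecidableEq ι] (S : Matrix (Fin m) ι ℝ)
    (P U : Matrix ι (Fin s) ℝ) (R R' : Matrix (Fin s) (Fin s) ℝ) (hU : Uᵀ * U = 1) (hP : P = U * R)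
    (hU' : U = P * R') (B : Matrix ι (Fin nc) ℝ) (Xopt Y : Matrix (Fin s) (Fin nc) ℝ)
    (hXopt : ∀ X : Matrix (Fin s) (Fin nc) ℝ, frobSq (P * Xopt - B) ≤ frobSq (P * X - B))
    (hY : ∀ X : Matrix (Fin s) (Fin nc) ℝ, frobSq (S * P * Y - S * B) ≤ frobSq (S * P * X - S * B))
    (ε : ℝ) (h1 : frobSq (Uᵀ * (Sᵀ * S - 1) * U) ≤ 1 / 4)
    (h2 : frobSq (Uᵀ * (Sᵀ * S - 1) * (P * Xopt - B)) ≤ ε / 4 * frobSq (P * Xopt - B)) :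
    frobSq (P * Y - B) ≤ (1 + ε) * frobSq (P * Xopt - B) := by
  have n1 := normal_eq P B Xopt hXopt
  have n2 := normal_eq (S * P) (S * B) Y hY
  set M := P * Xopt - B with hM
  have u1 : Uᵀ * M = 0 := by
    rw [hU', Matrix.transpose_mul, Matrix.mul_assoc, n1, Matrix.mul_zero]
  set Z := R * (Y - Xopt) with hZ
  have e : P * Y - B = U * Z + M := by
    rw [hZ, ← Matrix.mul_assoc, ← hP, hM, Matrix.mul_sub]; abel
  have u2 : Uᵀ * (Sᵀ * S) * (U * Z + M) = 0 := by
    rw [← e]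
    have : Uᵀ * (Sᵀ * S) * (P * Y - B) = R'ᵀ * ((S * P)ᵀ * (S * P * Y - S * B)) := by
      rw [hU']
      simp only [Matrix.transpose_mul, Matrix.mul_assoc, Matrix.mul_sub]
    rw [this, n2, Matrix.mul_zero]
  have u3 : Z = -(Uᵀ * (Sᵀ * S - 1) * U * Z) - Uᵀ * (Sᵀ * S - 1) * M := by
    have a1 : Uᵀ * (Sᵀ * S - 1) * U * Z = Uᵀ * (Sᵀ * S) * (U * Z) - Z := by
      rw [Matrix.mul_sub, Matrix.mul_one, Matrix.sub_mul, hU, Matrix.sub_mul, Matrix.one_mul, Matrix.mul_assoc _ U]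
    have a2 : Uᵀ * (Sᵀ * S - 1) * M = Uᵀ * (Sᵀ * S) * M := by
      rw [Matrix.mul_sub Uᵀ, Matrix.mul_one, Matrix.sub_mul, u1, sub_zero]
    rw [Matrix.mul_add] at u2
    rw [a1, a2, eq_neg_of_add_eq_zero_left u2]; abel
  have e2 : frobSq (P * Y - B) = frobSq Z + frobSq M := by
    rw [e, frobSq_add, Matrix.transpose_mul, Matrix.mul_assoc, u1, Matrix.mul_zero, Matrix.trace_zero,
      frobSq_eq_trace (U * Z), Matrix.transpose_mul, Matrix.mul_assoc, ← Matrix.mul_assoc Uᵀ, hU, Matrix.one_mul,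
      ← frobSq_eq_trace]
    ring
  have hn : ‖Z‖ ≤ ‖Uᵀ * (Sᵀ * S - 1) * U‖ * ‖Z‖ + ‖Uᵀ * (Sᵀ * S - 1) * M‖ := by
    calc ‖Z‖ = ‖-(Uᵀ * (Sᵀ * S - 1) * U * Z) - Uᵀ * (Sᵀ * S - 1) * M‖ := congrArg _ u3
      _ ≤ ‖-(Uᵀ * (Sᵀ * S - 1) * U * Z)‖ + ‖Uᵀ * (Sᵀ * S - 1) * M‖ := norm_sub_le _ _
      _ ≤ _ := by
        rw [norm_neg]
        gcongr
        exact Matrix.frobenius_norm_mul _ _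
  rw [frobSq_eq_norm] at h1 h2
  have h1' : ‖Uᵀ * (Sᵀ * S - 1) * U‖ ≤ 1 / 2 := by
    apply le_of_sq_le_sq _ (by norm_num)
    linarith
  have hz : ‖Z‖ ≤ 2 * ‖Uᵀ * (Sᵀ * S - 1) * M‖ := by
    have := mul_le_mul_of_nonneg_right h1' (norm_nonneg Z)
    linarith
  have hz2 : ‖Z‖ ^ 2 ≤ 4 * ‖Uᵀ * (Sᵀ * S - 1) * M‖ ^ 2 := by
    have := pow_le_pow_left₀ (norm_nonneg Z) hz 2
    nlinarith
  rw [e2, frobSq_eq_norm Z]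
  linarith
end

lemma amm_entry {q : ℕ} {n : Fin q → ℕ} {Γ : Type*} [Fintype Γ] (π : Γ → ℝ)
    (K : Γ → Matrix (∀ k, Fin (n k)) (∀ k, Fin (n k)) ℝ) (c : ℝ) (hc : 0 ≤ c)
    (hK : ∀ i j k l, |∑ γ, π γ * (K γ i j * K γ k l)| ≤
      c * ∏ t, wPair (i t) (j t) (k t) (l t)) (f g : (∀ k, Fin (n k)) → ℝ) :
    ∑ γ, π γ * (∑ i, ∑ j, f i * K γ i j * g j) ^ 2 ≤
      c * 3 ^ q * ((∑ i, f i ^ 2) * (∑ i, g i ^ 2)) := by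
  have e : ∑ γ, π γ * (∑ i, ∑ j, f i * K γ i j * g j) ^ 2 =
      ∑ i, ∑ j, ∑ k, ∑ l, (f i * g j * f k * g l) * ∑ γ, π γ * (K γ i j * K γ k l) := by
    simp only [sq, Finset.sum_mul, Finset.mul_sum]
    rw [Finset.sum_comm]
    refine Finset.sum_congr rfl fun i _ => ?_
    rw [Finset.sum_comm]
    refine Finset.sum_congr rfl fun j _ => ?_
    rw [Finset.sum_comm]
    refine Finset.sum_congr rfl fun k _ => ?_
    rw [Finset.sum_comm]
    refine Finset.sum_congr rfl fun l _ => ?_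
    refine Finset.sum_congr rfl fun γ _ => ?_
    ring
  rw [e]
  have hq := quad q n (fun i => |f i|) (fun i => |g i|) (fun i => |f i|) (fun i => |g i|)
    (fun _ => abs_nonneg _) (fun _ => abs_nonneg _) (fun _ => abs_nonneg _) (fun _ => abs_nonneg _)
  simp only [sq_abs] at hq
  have e2 : √(∑ i, f i ^ 2) * √(∑ i, g i ^ 2) * √(∑ i, f i ^ 2) * √(∑ i, g i ^ 2) =
      (∑ i, f i ^ 2) * (∑ i, g i ^ 2) := by
    have h1 := Real.mul_self_sqrt (show 0 ≤ ∑ i, f i ^ 2 by positivity)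
    have h2 := Real.mul_self_sqrt (show 0 ≤ ∑ i, g i ^ 2 by positivity)
    calc _ = (√(∑ i, f i ^ 2) * √(∑ i, f i ^ 2)) * (√(∑ i, g i ^ 2) * √(∑ i, g i ^ 2)) := by ring
      _ = _ := by rw [h1, h2]
  rw [e2] at hq
  calc _ ≤ ∑ i, ∑ j, ∑ k, ∑ l, c * ((∏ t, wPair (i t) (j t) (k t) (l t)) *
        (|f i| * |g j| * |f k| * |g l|)) := by
        refine Finset.sum_le_sum fun i _ => Finset.sum_le_sum fun j _ =>
          Finset.sum_le_sum fun k _ => Finset.sum_le_sum fun l _ => ?_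
        refine (le_abs_self _).trans ?_
        rw [abs_mul, abs_mul, abs_mul, abs_mul]
        refine (mul_le_mul_of_nonneg_left (hK i j k l) (by positivity)).trans (le_of_eq ?_)
        ring
    _ = c * ∑ i, ∑ j, ∑ k, ∑ l, ((∏ t, wPair (i t) (j t) (k t) (l t)) *
        (|f i| * |g j| * |f k| * |g l|)) := by
        simp only [Finset.mul_sum]
    _ ≤ _ := by
        rw [mul_assoc]
        exact mul_le_mul_of_nonneg_left hq hc

lemma amm {q : ℕ} {n : Fin q → ℕ} {Γ : Type*} [Fintype Γ] (π : Γ → ℝ)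
    (K : Γ → Matrix (∀ k, Fin (n k)) (∀ k, Fin (n k)) ℝ) (c : ℝ) (hc : 0 ≤ c)
    (hK : ∀ i j k l, |∑ γ, π γ * (K γ i j * K γ k l)| ≤
      c * ∏ t, wPair (i t) (j t) (k t) (l t)) {s r : ℕ}
    (A : Matrix (∀ k, Fin (n k)) (Fin s) ℝ) (B : Matrix (∀ k, Fin (n k)) (Fin r) ℝ) :
    ∑ γ, π γ * frobSq (Aᵀ * K γ * B) ≤ c * 3 ^ q * (frobSq A * frobSq B) := by
  have hab : ∀ γ a b, (Aᵀ * K γ * B) a b = ∑ i, ∑ j, A i a * K γ i j * B j b := by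
    intro γ a b
    simp only [Matrix.mul_apply, Matrix.transpose_apply, Finset.sum_mul]
    rw [Finset.sum_comm]
  have e : ∑ γ, π γ * frobSq (Aᵀ * K γ * B) =
      ∑ a, ∑ b, ∑ γ, π γ * (∑ i, ∑ j, A i a * K γ i j * B j b) ^ 2 := by
    simp only [frobSq, hab, Finset.mul_sum]
    rw [Finset.sum_comm]
    refine Finset.sum_congr rfl fun i _ => ?_
    rw [Finset.sum_comm]
  rw [e]
  calc _ ≤ ∑ a, ∑ b, c * 3 ^ q * ((∑ i, A i a ^ 2) * (∑ i, B i b ^ 2)) :=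
        Finset.sum_le_sum fun a _ => Finset.sum_le_sum fun b _ =>
          amm_entry π K c hc hK (fun i => A i a) (fun i => B i b)
    _ = _ := by
        simp only [frobSq]
        rw [Finset.sum_comm (f := fun i j => A i j ^ 2), Finset.sum_comm (f := fun i j => B i j ^ 2),
          Finset.sum_mul_sum]
        simp only [Finset.mul_sum]

/-- The sign of a boolean. -/
def sg (b : Bool) : ℝ := if b = true then 1 else -1

lemma sg_mul_self (b : Bool) : sg b * sg b = 1 := by cases b <;> simp [sg]

lemma sgn_prod_zero {ι : Type*} [Fintype ι] [DecidableEq ι] (r : (ι → Bool) → ℝ)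
    (hr : ∀ T : Finset ι, T.card ≤ 4 →
      ∑ u, r u * (if ∀ i ∈ T, u i = true then 1 else 0) = (1 / 2) ^ T.card)
    (T : Finset ι) (hT : T.card ≤ 4) (hne : T.Nonempty) :
    ∑ u, r u * ∏ i ∈ T, sg (u i) = 0 := by
  have h1 : ∀ u : ι → Bool, ∏ i ∈ T, sg (u i) =
      ∑ U ∈ T.powerset, (2 ^ U.card * (if ∀ i ∈ U, u i = true then 1 else 0)) *
        ∏ i ∈ T \ U, (-1 : ℝ) := by
    intro u
    have : ∀ i, sg (u i) = (2 * if u i = true then 1 else 0) + (-1) := by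
      intro i; unfold sg; split_ifs <;> norm_num
    simp only [this]
    rw [Finset.prod_add]
    refine Finset.sum_congr rfl fun U _ => ?_
    rw [Finset.prod_mul_distrib, Finset.prod_const, Finset.prod_boole]
    congr!
  simp only [h1, Finset.mul_sum]
  rw [Finset.sum_comm]
  have h2 : ∀ U ∈ T.powerset, ∑ u, r u * ((2 ^ U.card * (if ∀ i ∈ U, u i = true then 1 else 0)) *
        ∏ i ∈ T \ U, (-1 : ℝ)) = (∏ i ∈ U, (1 : ℝ)) * ∏ i ∈ T \ U, (-1 : ℝ) := by
    intro U hU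
    have hc : U.card ≤ 4 := (Finset.card_le_card (Finset.mem_powerset.mp hU)).trans hT
    calc _ = (2 ^ U.card * ∑ u, r u * (if ∀ i ∈ U, u i = true then 1 else 0)) *
          ∏ i ∈ T \ U, (-1 : ℝ) := by
          rw [Finset.mul_sum, Finset.sum_mul]
          refine Finset.sum_congr rfl fun u _ => by ring
      _ = _ := by
          rw [hr U hc, ← mul_pow]; norm_num
  rw [Finset.sum_congr rfl h2, ← Finset.prod_add]
  obtain ⟨x, hx⟩ := hne
  exact Finset.prod_eq_zero hx (by norm_num)

lemma sign_four {ι : Type*} [Fintype ι] [DecidableEq ι] (r : (ι → Bool) → ℝ)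
    (hr : ∀ T : Finset ι, T.card ≤ 4 →
      ∑ u, r u * (if ∀ i ∈ T, u i = true then 1 else 0) = (1 / 2) ^ T.card)
    (a b c d : ι) :
    ∑ u, r u * (sg (u a) * sg (u b) * sg (u c) * sg (u d)) = wPair a b c d := by
  have h0 : ∑ u, r u = 1 := by simpa using hr ∅ (by simp)
  have h2 : ∀ x y : ι, ∑ u, r u * (sg (u x) * sg (u y)) = if x = y then 1 else 0 := by
    intro x y
    split_ifs with h
    · subst h; simpa [sg_mul_self] using h0
    · have := sgn_prod_zero r hr {x, y} (Finset.card_le_two.trans (by norm_num)) (by simp)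
      simpa [Finset.prod_pair h] using this
  by_cases hab : a = b
  · subst hab
    simp only [sg_mul_self, one_mul, h2]
    unfold wPair; simp; congr 1; aesop
  by_cases hac : a = c
  · subst hac
    have : ∀ u : ι → Bool, sg (u a) * sg (u b) * sg (u a) * sg (u d) = sg (u b) * sg (u d) := by
      intro u; linear_combination sg (u b) * sg (u d) * sg_mul_self (u a)
    simp only [this, h2]
    unfold wPair; simp [hab]; congr 1; aesop
  by_cases had : a = d
  · subst had
    have : ∀ u : ι → Bool, sg (u a) * sg (u b) * sg (u c) * sg (u a) = sg (u b) * sg (u c) := by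
      intro u; linear_combination sg (u b) * sg (u c) * sg_mul_self (u a)
    simp only [this, h2]
    unfold wPair; simp [hab, hac]
  have hw : wPair a b c d = 0 := by unfold wPair; simp [hab, hac, had]
  rw [hw]
  by_cases hbc : b = c
  · subst hbc
    have : ∀ u : ι → Bool, sg (u a) * sg (u b) * sg (u b) * sg (u d) = sg (u a) * sg (u d) := by
      intro u; linear_combination sg (u a) * sg (u d) * sg_mul_self (u b)
    simp only [this, h2, had, if_false]
  by_cases hbd : b = d
  · subst hbd
    have : ∀ u : ι → Bool, sg (u a) * sg (u b) * sg (u c) * sg (u b) = sg (u a) * sg (u c) := by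
      intro u; linear_combination sg (u a) * sg (u c) * sg_mul_self (u b)
    simp only [this, h2, hac, if_false]
  by_cases hcd : c = d
  · subst hcd
    have : ∀ u : ι → Bool, sg (u a) * sg (u b) * sg (u c) * sg (u c) = sg (u a) * sg (u b) := by
      intro u; linear_combination sg (u a) * sg (u b) * sg_mul_self (u c)
    simp only [this, h2, hab, if_false]
  have := sgn_prod_zero r hr {a, b, c, d} Finset.card_le_four (by simp)
  rw [← this]
  refine Finset.sum_congr rfl fun u _ => ?_
  rw [Finset.prod_insert (by simp [hab, hac, had]), Finset.prod_insert (by simp [hbc, hbd]),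
    Finset.prod_pair hcd]
  ring

lemma hash_diff {ι : Type*} [Fintype ι] [DecidableEq ι] {m : ℕ} [NeZero m] (p : (ι → Fin m) → ℝ)
    (hp2 : ∀ a b, a ≠ b → ∀ x y, ∑ g, p g * (if g a = x ∧ g b = y then 1 else 0) = 1 / (m : ℝ) ^ 2)
    (a b : ι) (hab : a ≠ b) (c : ZMod m) :
    ∑ g, p g * (if ((g a : ℕ) : ZMod m) - ((g b : ℕ) : ZMod m) = c then 1 else 0) = 1 / (m : ℝ) := by
  have hx : ∀ y : Fin m, ∃ x : Fin m, ((x : ℕ) : ZMod m) = c + ((y : ℕ) : ZMod m) := fun y =>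
    ⟨⟨(c + ((y : ℕ) : ZMod m)).val, ZMod.val_lt _⟩, by simp⟩
  choose X hX using hx
  have inj : ∀ x y : Fin m, ((x : ℕ) : ZMod m) = ((y : ℕ) : ZMod m) → x = y := by
    intro x y h
    rw [ZMod.natCast_eq_natCast_iff] at h
    exact Fin.ext (Nat.ModEq.eq_of_lt_of_lt h x.2 y.2)
  have e : ∀ g : ι → Fin m, (if ((g a : ℕ) : ZMod m) - ((g b : ℕ) : ZMod m) = c then (1 : ℝ) else 0) =
      ∑ y, if g a = X y ∧ g b = y then 1 else 0 := by
    intro g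
    rw [Finset.sum_eq_single (g b)]
    · congr 1
      simp only [and_true, eq_iff_iff, sub_eq_iff_eq_add]
      rw [← hX]
      exact ⟨inj _ _, fun h => by rw [h]⟩
    · intro y _ hy
      simp [hy.symm]
    · simp
  simp only [e, Finset.mul_sum]
  rw [Finset.sum_comm]
  simp only [hp2 a b hab]
  have : (m : ℝ) ≠ 0 := by exact_mod_cast NeZero.ne m
  simp
  field_simp

lemma hash_multi {m : ℕ} [NeZero m] (q : ℕ) : ∀ (n : Fin q → ℕ)
    (p : ∀ k, (Fin (n k) → Fin m) → ℝ)
    (_ : ∀ k, ∑ g, p k g = 1)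
    (_ : ∀ k a b, a ≠ b → ∀ x y,
      ∑ g, p k g * (if g a = x ∧ g b = y then 1 else 0) = 1 / (m : ℝ) ^ 2)
    (i j : ∀ k, Fin (n k)) (_ : i ≠ j) (c : ZMod m),
    ∑ g : (∀ k, Fin (n k) → Fin m), (∏ k, p k (g k)) *
      (if ∑ k, (((g k (i k) : ℕ) : ZMod m) - ((g k (j k) : ℕ) : ZMod m)) = c then 1 else 0)
      = 1 / (m : ℝ) := by
  induction q with
  | zero =>
    intro n p hp1 hp2 i j hij
    exact absurd (Subsingleton.elim i j) hij
  | succ q ih =>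
    intro n p hp1 hp2 i j hij c
    rw [sum_cons (β := fun k => Fin (n k) → Fin m)]
    simp only [Fin.prod_univ_succ, Fin.sum_univ_succ, Fin.cons_zero, Fin.cons_succ]
    by_cases h0 : i 0 = j 0
    · have hr : (fun k : Fin q => i k.succ) ≠ (fun k : Fin q => j k.succ) := by
        intro h
        apply hij
        funext k
        refine Fin.cases h0 (fun k => congrFun h k) k
      have := ih (fun k => n k.succ) (fun k => p k.succ) (fun k => hp1 _) (fun k => hp2 _)
        (fun k => i k.succ) (fun k => j k.succ) hr c
      simp only [h0, sub_self, zero_add, mul_assoc, ← Finset.mul_sum]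
      simp only [this, ← Finset.sum_mul, hp1, one_mul]
    · rw [Finset.sum_comm]
      have hd := fun c => hash_diff (p 0) (hp2 0) (i 0) (j 0) h0 c
      have : ∀ y : (∀ k : Fin q, Fin (n k.succ) → Fin m),
         ∑ x, (p 0 x * ∏ k : Fin q, p k.succ (y k)) *
          (if (((x (i 0) : ℕ) : ZMod m) - ((x (j 0) : ℕ) : ZMod m)) + ∑ k : Fin q, (((y k (i k.succ) : ℕ) : ZMod m) - ((y k (j k.succ) : ℕ) : ZMod m)) = c then (1:ℝ) else 0)
          = (∏ k : Fin q, p k.succ (y k)) * (1 / (m : ℝ)) := by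
        intro y
        rw [← hd (c - ∑ k : Fin q, (((y k (i k.succ) : ℕ) : ZMod m) - ((y k (j k.succ) : ℕ) : ZMod m))), Finset.mul_sum]
        refine Finset.sum_congr rfl fun x _ => ?_
        simp only [eq_sub_iff_add_eq]
        ring
      rw [Finset.sum_congr rfl (fun y _ => this y), ← Finset.sum_mul]
      have h1 := Finset.prod_univ_sum (fun k : Fin q => (Finset.univ : Finset (Fin (n k.succ) → Fin m)))
        (fun k g => p k.succ g)
      rw [Fintype.piFinset_univ] at h1
      rw [← h1]
      simp [hp1]

/-- Signs from booleans. -/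
def sgF {q : ℕ} {n : Fin q → ℕ} (u : ∀ k, Fin (n k) → Bool) : ∀ k, Fin (n k) → ℝ :=
  fun k i => sg (u k i)

/-- The error kernel of a sketching matrix. -/
def kern {m : ℕ} {ι : Type*} [DecidableEq ι] (S : Matrix (Fin m) ι ℝ) : Matrix ι ι ℝ :=
  Sᵀ * S - 1

lemma kernel_entry {q m : ℕ} [NeZero m] {n : Fin q → ℕ} (g : ∀ k, Fin (n k) → Fin m)
    (u : ∀ k, Fin (n k) → Bool) (i j : ∀ k, Fin (n k)) :
    kern (tsMat g (sgF u)) i j =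
      (if i ≠ j ∧ hashFam g i = hashFam g j then 1 else 0) *
        ((∏ t, sg (u t (i t))) * ∏ t, sg (u t (j t))) := by
  have h1 : ((tsMat g (sgF u))ᵀ * tsMat g (sgF u)) i j =
      if hashFam g i = hashFam g j then ((∏ t, sg (u t (i t))) * ∏ t, sg (u t (j t))) else 0 := by
    simp only [Matrix.mul_apply, Matrix.transpose_apply, tsMat, countSketch, Matrix.of_apply, sgF]
    simp only [ite_mul, zero_mul, Finset.sum_ite_eq, Finset.mem_univ, if_true, mul_ite, mul_zero]
  rw [kern, Matrix.sub_apply, h1, Matrix.one_apply]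
  by_cases hij : i = j
  · subst hij
    simp [← Finset.prod_mul_distrib, sg_mul_self]
  · simp [hij]

lemma hashFam_eq_iff {q m : ℕ} [NeZero m] {n : Fin q → ℕ} (g : ∀ k, Fin (n k) → Fin m)
    (i j : ∀ k, Fin (n k)) : hashFam g i = hashFam g j ↔
      ∑ k, (((g k (i k) : ℕ) : ZMod m) - ((g k (j k) : ℕ) : ZMod m)) = 0 := by
  rw [Finset.sum_sub_distrib, sub_eq_zero, ← Nat.cast_sum, ← Nat.cast_sum,
    ZMod.natCast_eq_natCast_iff]
  simp [hashFam, Nat.ModEq]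

lemma kernel_cov {q m : ℕ} [NeZero m] {n : Fin q → ℕ}
    (p : ∀ k, (Fin (n k) → Fin m) → ℝ) (hp0 : ∀ k g, 0 ≤ p k g)
    (hp1 : ∀ k, ∑ g, p k g = 1)
    (hp2 : ∀ k a b, a ≠ b → ∀ x y,
      ∑ g, p k g * (if g a = x ∧ g b = y then 1 else 0) = 1 / (m : ℝ) ^ 2)
    (r : ∀ k, (Fin (n k) → Bool) → ℝ)
    (hr : ∀ k, ∀ T : Finset (Fin (n k)), T.card ≤ 4 →
      ∑ u, r k u * (if ∀ i ∈ T, u i = true then 1 else 0) = (1 / 2) ^ T.card)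
    (i j k l : ∀ k, Fin (n k)) :
    |∑ γ : (∀ k, Fin (n k) → Fin m) × (∀ k, Fin (n k) → Bool),
      ((∏ k, p k (γ.1 k)) * ∏ k, r k (γ.2 k)) *
      (kern (tsMat γ.1 (sgF γ.2)) i j *
       kern (tsMat γ.1 (sgF γ.2)) k l)| ≤
      1 / (m : ℝ) * ∏ t, wPair (i t) (j t) (k t) (l t) := by
  simp only [kernel_entry]
  have hs : ∑ u : (∀ k, Fin (n k) → Bool), (∏ t, r t (u t)) *
      (∏ t, (sg (u t (i t)) * sg (u t (j t)) * sg (u t (k t)) * sg (u t (l t)))) =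
      ∏ t, wPair (i t) (j t) (k t) (l t) := by
    have h1 := Finset.prod_univ_sum (fun k : Fin q => (Finset.univ : Finset (Fin (n k) → Bool)))
        (fun t u => r t u * (sg (u (i t)) * sg (u (j t)) * sg (u (k t)) * sg (u (l t))))
    rw [Fintype.piFinset_univ] at h1
    simp only [Finset.prod_mul_distrib] at h1 ⊢
    rw [← h1]
    exact Finset.prod_congr rfl fun t _ =>
      sign_four (r t) (fun T hT => by convert! hr t T hT) _ _ _ _
  have e : ∑ γ : (∀ k, Fin (n k) → Fin m) × (∀ k, Fin (n k) → Bool),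
      ((∏ k, p k (γ.1 k)) * ∏ k, r k (γ.2 k)) *
      (((if i ≠ j ∧ hashFam γ.1 i = hashFam γ.1 j then 1 else 0) *
        ((∏ t, sg (γ.2 t (i t))) * ∏ t, sg (γ.2 t (j t)))) *
       ((if k ≠ l ∧ hashFam γ.1 k = hashFam γ.1 l then 1 else 0) *
        ((∏ t, sg (γ.2 t (k t))) * ∏ t, sg (γ.2 t (l t))))) =
      (∑ g : (∀ k, Fin (n k) → Fin m), (∏ k, p k (g k)) *
        ((if i ≠ j ∧ hashFam g i = hashFam g j then 1 else 0) *
          (if k ≠ l ∧ hashFam g k = hashFam g l then 1 else 0))) *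
      ∏ t, wPair (i t) (j t) (k t) (l t) := by
    rw [← hs, Finset.sum_mul_sum, Fintype.sum_prod_type]
    refine Finset.sum_congr rfl fun g _ => Finset.sum_congr rfl fun u _ => ?_
    simp only [Finset.prod_mul_distrib]
    ring
  rw [e]
  have hP : ∀ g : (∀ k, Fin (n k) → Fin m), 0 ≤ ∏ k, p k (g k) := fun g =>
    Finset.prod_nonneg fun k _ => hp0 k _
  have hw : 0 ≤ ∏ t, wPair (i t) (j t) (k t) (l t) :=
    Finset.prod_nonneg fun t _ => wPair_nonneg _ _ _ _
  rw [abs_of_nonneg]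
  · refine mul_le_mul_of_nonneg_right ?_ hw
    by_cases hij : i = j
    · simp [hij]
    · rw [← hash_multi q n p hp1 hp2 i j hij 0]
      refine Finset.sum_le_sum fun g _ => mul_le_mul_of_nonneg_left ?_ (hP g)
      simp only [← hashFam_eq_iff]
      split_ifs <;> simp_all
  · refine mul_nonneg (Finset.sum_nonneg fun g _ => mul_nonneg (hP g) ?_) hw
    split_ifs <;> simp

section measure
variable {Ω : Type*} [MeasurableSpace Ω] (μ : Measure Ω) [IsProbabilityMeasure μ]

lemma nullMeas_of_add (E : Set Ω) (h : μ E + μ Eᶜ ≤ 1) : NullMeasurableSet E μ := by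
  set T := toMeasurable μ E
  set T' := toMeasurable μ Eᶜ
  have hT : MeasurableSet T := measurableSet_toMeasurable _ _
  have hT' : MeasurableSet T' := measurableSet_toMeasurable _ _
  have hsub : E ⊆ T := subset_toMeasurable _ _
  have hsub' : Eᶜ ⊆ T' := subset_toMeasurable _ _
  have hun : T ∪ T' = Set.univ := by
    ext x; by_cases hx : x ∈ E
    · simp [hsub hx]
    · simp [hsub' hx]
  have h1 := measure_union_add_inter (μ := μ) T hT'
  rw [hun, measure_univ, measure_toMeasurable, measure_toMeasurable] at h1
  have h0 : μ (T ∩ T') = 0 := by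
    have : 1 + μ (T ∩ T') ≤ 1 + 0 := by rw [h1, add_zero]; exact h
    exact le_antisymm ((ENNReal.add_le_add_iff_left ENNReal.one_ne_top).mp this) bot_le
  have h2 : μ (T \ E) = 0 := by
    refine measure_mono_null ?_ h0
    intro x hx
    exact ⟨hx.1, hsub' hx.2⟩
  have : E =ᵐ[μ] T := by
    refine Filter.EventuallyLE.antisymm (Filter.Eventually.of_forall hsub) ?_
    exact ae_le_set.mpr h2
  exact ⟨T, hT, this⟩

lemma nullMeas_of_partition {γ : Type*} [Fintype γ] [DecidableEq γ] (X : Ω → γ)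
    (h : ∑ g, μ {ω | X ω = g} ≤ 1) (g : γ) : NullMeasurableSet {ω | X ω = g} μ := by
  apply nullMeas_of_add
  refine le_trans ?_ h
  rw [← Finset.add_sum_erase _ _ (Finset.mem_univ g)]
  gcongr
  refine (measure_mono ?_).trans (measure_biUnion_finset_le _ _)
  intro ω hω
  simp only [Set.mem_iUnion]
  exact ⟨X ω, by simpa using hω, rfl⟩

lemma law_sum {γ : Type*} [Fintype γ] [DecidableEq γ] (X : Ω → γ)
    (hX : ∀ g, NullMeasurableSet {ω | X ω = g} μ) (Q : γ → Prop) [DecidablePred Q] :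
    ∑ g, μ.real {ω | X ω = g} * (if Q g then 1 else 0) = μ.real {ω | Q (X ω)} := by
  simp only [mul_ite, mul_one, mul_zero]
  rw [← Finset.sum_filter, ← measureReal_biUnion_finset₀]
  · congr 1
    ext ω
    simp
  · intro a _ b _ hab
    apply Disjoint.aedisjoint
    rw [Set.disjoint_left]
    rintro ω rfl h
    exact hab h
  · intro b _
    exact hX b

lemma nullMeas_pi {ι γ : Type*} [Fintype ι] (X : Ω → ι → γ)
    (hX : ∀ i g, NullMeasurableSet {ω | X ω i = g} μ) (g : ι → γ) :
    NullMeasurableSet {ω | X ω = g} μ := by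
  have : {ω | X ω = g} = ⋂ i, {ω | X ω i = g i} := by
    ext ω; simp [funext_iff]
  rw [this]
  exact NullMeasurableSet.iInter fun i => hX i _

lemma hash_nm {ι : Type*} [Fintype ι] {m : ℕ} [NeZero m] (h : Ω → ι → Fin m)
    (hh : KWiseIndepHash μ 3 h) (g : ι → Fin m) : NullMeasurableSet {ω | h ω = g} μ := by
  apply nullMeas_pi
  intro i j
  apply nullMeas_of_partition μ (fun ω => h ω i)
  simp only [hh.1 i]
  rw [Finset.sum_const, Finset.card_univ, Fintype.card_fin, nsmul_eq_mul, one_div,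
    ENNReal.mul_inv_cancel (by exact_mod_cast NeZero.ne m) (ENNReal.natCast_ne_top m)]

lemma hash_p2 {ι : Type*} [Fintype ι] [DecidableEq ι] {m : ℕ} [NeZero m] (h : Ω → ι → Fin m)
    (hh : KWiseIndepHash μ 3 h) (a b : ι) (hab : a ≠ b) (x y : Fin m) :
    ∑ g, μ.real {ω | h ω = g} * (if g a = x ∧ g b = y then 1 else 0) = 1 / (m : ℝ) ^ 2 := by
  rw [law_sum μ h (hash_nm μ h hh) (fun g => g a = x ∧ g b = y)]
  have h2 := hh.2 {a, b} (Finset.card_le_two.trans (by norm_num)) (fun i => if i = a then x else y)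
  rw [Finset.prod_pair hab, hh.1, hh.1] at h2
  have e : {ω | h ω a = x ∧ h ω b = y} =
      {ω | ∀ i ∈ ({a, b} : Finset ι), h ω i = if i = a then x else y} := by
    ext ω
    simp [hab.symm]
  rw [Measure.real, e, h2]
  simp [sq]

lemma sign_nm {ι : Type*} [Fintype ι] (v : Ω → ι → ℝ)
    (hv : KWiseIndepSign μ 4 v) (u : ι → Bool) :
    NullMeasurableSet {ω | (fun i => decide (v ω i = 1)) = u} μ := by
  apply nullMeas_pi μ (fun ω i => decide (v ω i = 1))
  intro i j
  apply nullMeas_of_partition μ (fun ω => decide (v ω i = 1))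
  have e : {ω | v ω i ≠ 1} = {ω | v ω i = -1} := by
    ext ω
    rcases hv.1 ω i with h | h <;> simp [h] <;> norm_num
  simp only [Fintype.sum_bool, decide_eq_true_eq, decide_eq_false_iff_not]
  have e' : {ω | ¬ v ω i = 1} = {ω | v ω i = -1} := e
  rw [e', hv.2.1 i 1 (Or.inl rfl), hv.2.1 i (-1) (Or.inr rfl)]
  simp [ENNReal.inv_two_add_inv_two]

lemma sign_r {ι : Type*} [Fintype ι] [DecidableEq ι] (v : Ω → ι → ℝ)
    (hv : KWiseIndepSign μ 4 v) (T : Finset ι) (hT : T.card ≤ 4) :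
    ∑ u : ι → Bool, μ.real {ω | v ω = fun i => sg (u i)} * (if ∀ i ∈ T, u i = true then 1 else 0) =
      (1 / 2) ^ T.card := by
  have e : ∀ u : ι → Bool, {ω | v ω = fun i => sg (u i)} =
      {ω | (fun i => decide (v ω i = 1)) = u} := by
    intro u
    ext ω
    simp only [Set.mem_ofPred_eq, funext_iff]
    refine forall_congr' fun i => ?_
    rcases hv.1 ω i with h | h <;> cases u i <;> simp [h, sg] <;> norm_num
  simp only [e]
  rw [law_sum μ _ (sign_nm μ v hv) (fun u => ∀ i ∈ T, u i = true)]
  have h2 := hv.2.2 T hT (fun _ => 1)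
  simp only [decide_eq_true_eq]
  rw [Measure.real, h2, Finset.prod_congr rfl fun i _ => hv.2.1 i 1 (Or.inl rfl)]
  simp

lemma markov_atoms {q m : ℕ} [NeZero m] {n : Fin q → ℕ}
    (H : ∀ k, Ω → Fin (n k) → Fin m) (V : ∀ k, Ω → Fin (n k) → ℝ)
    (h4 : ∀ k, KWiseIndepSign μ 4 (V k))
    (hmut : IndepHashSigns μ H V)
    (Φ : Matrix (Fin m) (∀ k, Fin (n k)) ℝ → ℝ) (hΦ : ∀ S, 0 ≤ Φ S) (c : ℝ) (hc : 0 < c) :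
    μ.real {ω | c < Φ (tsMat (fun k => H k ω) (fun k => V k ω))} * c ≤
      ∑ γ : (∀ k, Fin (n k) → Fin m) × (∀ k, Fin (n k) → Bool),
      ((∏ k, μ.real {ω | H k ω = γ.1 k}) * ∏ k, μ.real {ω | V k ω = fun i => sg (γ.2 k i)}) *
        Φ (tsMat γ.1 (sgF γ.2)) := by
  classical
  set atom : ((∀ k, Fin (n k) → Fin m) × (∀ k, Fin (n k) → Bool)) → Set Ω := fun γ =>
    {ω | (∀ k, H k ω = γ.1 k) ∧ (∀ k, V k ω = sgF γ.2 k)} with hatom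
  have hat : ∀ γ, μ.real (atom γ) =
      (∏ k, μ.real {ω | H k ω = γ.1 k}) * ∏ k, μ.real {ω | V k ω = fun i => sg (γ.2 k i)} := by
    intro γ
    rw [Measure.real, hatom]
    simp only
    rw [hmut γ.1 (sgF γ.2), ENNReal.toReal_mul, ENNReal.toReal_prod, ENNReal.toReal_prod]
    rfl
  simp only [← hat]
  have hsub : {ω | c < Φ (tsMat (fun k => H k ω) (fun k => V k ω))} ⊆
      ⋃ γ ∈ Finset.univ.filter (fun γ : (∀ k, Fin (n k) → Fin m) × (∀ k, Fin (n k) → Bool) =>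
        c < Φ (tsMat γ.1 (sgF γ.2))), atom γ := by
    intro ω hω
    have hV : (fun k => V k ω) = sgF (fun k i => decide (V k ω i = 1)) := by
      funext k i
      rcases (h4 k).1 ω i with h | h <;> simp [h, sgF, sg]
    simp only [Set.mem_iUnion]
    refine ⟨(fun k => H k ω, fun k i => decide (V k ω i = 1)), ?_, ?_⟩
    · simp only [Finset.mem_filter, Finset.mem_univ, true_and]
      rw [← hV]; exact hω
    · exact ⟨fun k => rfl, fun k => congrFun hV k⟩
  calc _ ≤ (∑ γ ∈ Finset.univ.filter (fun γ : (∀ k, Fin (n k) → Fin m) × (∀ k, Fin (n k) → Bool) =>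
        c < Φ (tsMat γ.1 (sgF γ.2))), μ.real (atom γ)) * c := by
        refine mul_le_mul_of_nonneg_right ?_ hc.le
        exact (measureReal_mono hsub (measure_ne_top _ _)).trans (measureReal_biUnion_finset_le _ _)
    _ ≤ ∑ γ ∈ Finset.univ.filter (fun γ : (∀ k, Fin (n k) → Fin m) × (∀ k, Fin (n k) → Bool) =>
        c < Φ (tsMat γ.1 (sgF γ.2))), μ.real (atom γ) * Φ (tsMat γ.1 (sgF γ.2)) := by
        rw [Finset.sum_mul]
        refine Finset.sum_le_sum fun γ hγ => mul_le_mul_of_nonneg_left ?_ measureReal_nonneg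
        exact (Finset.mem_filter.mp hγ).2.le
    _ ≤ _ := Finset.sum_le_sum_of_subset_of_nonneg (Finset.filter_subset _ _)
        fun γ _ _ => mul_nonneg measureReal_nonneg (hΦ _)

lemma amm_prob {q m : ℕ} [NeZero m] {n : Fin q → ℕ}
    (H : ∀ k, Ω → Fin (n k) → Fin m) (V : ∀ k, Ω → Fin (n k) → ℝ)
    (h3 : ∀ k, KWiseIndepHash μ 3 (H k))
    (h4 : ∀ k, KWiseIndepSign μ 4 (V k))
    (hmut : IndepHashSigns μ H V) {s r : ℕ}
    (A : Matrix (∀ k, Fin (n k)) (Fin s) ℝ) (B : Matrix (∀ k, Fin (n k)) (Fin r) ℝ)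
    (c : ℝ) (hc : 0 < c) :
    μ.real {ω | c < (fun S : Matrix (Fin m) (∀ k, Fin (n k)) ℝ => frobSq (Aᵀ * kern S * B))
      (tsMat (fun k => H k ω) (fun k => V k ω))} * c ≤ 1 / (m : ℝ) * 3 ^ q * (frobSq A * frobSq B) := by
  refine (markov_atoms μ H V h4 hmut
    (fun S : Matrix (Fin m) (∀ k, Fin (n k)) ℝ => frobSq (Aᵀ * kern S * B)) (fun S => frobSq_nonneg _) c hc).trans ?_
  refine amm (fun γ : (∀ k, Fin (n k) → Fin m) × (∀ k, Fin (n k) → Bool) =>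
    ((∏ k, μ.real {ω | H k ω = γ.1 k}) * ∏ k, μ.real {ω | V k ω = fun i => sg (γ.2 k i)}))
    (fun γ : (∀ k, Fin (n k) → Fin m) × (∀ k, Fin (n k) → Bool) =>
    kern (tsMat γ.1 (sgF γ.2))) (1 / (m : ℝ)) (by positivity) ?_ A B
  intro i j k l
  refine kernel_cov (fun k g => μ.real {ω | H k ω = g}) (fun _ _ => measureReal_nonneg) ?_ ?_
    (fun k u => μ.real {ω | V k ω = fun i => sg (u i)}) ?_ i j k l
  · intro k
    simpa using law_sum μ (H k) (hash_nm μ (H k) (h3 k)) (fun _ => True)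
  · intro k a b hab x y
    exact hash_p2 μ (H k) (h3 k) a b hab x y
  · intro k T hT
    convert! sign_r μ (V k) (h4 k) T hT

end measure

/-- Theorem 4.3, TensorSketch for least squares: let
`P ∈ ℝ^{n₁⋯n_q × s}` have full column rank with `n₁⋯n_q > s`, let `B ∈ ℝ^{n₁⋯n_q × n}`, and
let `S` be a random TensorSketch matrix generated by mutually independent 3-wise independent
hash maps and mutually independent 4-wise independent sign functions.  Let `X_opt` minimize
`‖PX - B‖_F` and let `X̃_opt` be any minimizer of `‖SPX - SB‖_F`.  If
`m = max{8s²(2+3^q)/δ, 8s(2+3^q)/(εδ)}` then with probability at least `1 - δ`,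
`‖P X̃_opt - B‖_F² ≤ (1+ε) ‖P X_opt - B‖_F²`. -/
theorem tensorSketch_least_squares
    {Ω : Type*} [MeasurableSpace Ω] (μ : Measure Ω) [IsProbabilityMeasure μ]
    {q m : ℕ} [NeZero m] {n : Fin q → ℕ} {s nc : ℕ}
    (H : ∀ k, Ω → Fin (n k) → Fin m) (V : ∀ k, Ω → Fin (n k) → ℝ)
    (h3 : ∀ k, KWiseIndepHash μ 3 (H k))
    (h4 : ∀ k, KWiseIndepSign μ 4 (V k))
    (hmut : IndepHashSigns μ H V)
    (P : Matrix (∀ k, Fin (n k)) (Fin s) ℝ)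
    (hrank : P.rank = s) (hcard : s < ∏ k, n k)
    (B : Matrix (∀ k, Fin (n k)) (Fin nc) ℝ)
    (Xopt : Matrix (Fin s) (Fin nc) ℝ)
    (hXopt : ∀ X, frobSq (P * Xopt - B) ≤ frobSq (P * X - B))
    (ε δ : ℝ) (hε : 0 < ε) (hδ : 0 < δ)
    (hm : (m : ℝ) = max (8 * (s : ℝ) ^ 2 * (2 + 3 ^ q) / δ)
      (8 * (s : ℝ) * (2 + 3 ^ q) / (ε * δ))) :
    1 - δ ≤ (μ {ω |
      let S := tsMat (fun k => H k ω) (fun k => V k ω)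
      ∀ Y : Matrix (Fin s) (Fin nc) ℝ,
        (∀ X, frobSq (S * P * Y - S * B) ≤ frobSq (S * P * X - S * B)) →
          frobSq (P * Y - B) ≤ (1 + ε) * frobSq (P * Xopt - B)}).toReal := by
  have hpr : (0 : ℝ) < 2 + 3 ^ q := by positivity
  have hm0 : (0 : ℝ) < m := by exact_mod_cast Nat.pos_of_ne_zero (NeZero.ne m)
  have hs : (0 : ℝ) < s := by
    rcases Nat.eq_zero_or_pos s with h | h
    · subst h
      simp at hm
      exact absurd hm (NeZero.ne m)
    · exact_mod_cast h
  obtain ⟨U, R, R', hU, hPU, hUP⟩ := exists_orth P hrank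
  have hUs : frobSq U = s := by
    rw [frobSq_eq_trace, hU]; simp
  set M := P * Xopt - B with hM
  have hm1 : 8 * (s : ℝ) ^ 2 * (2 + 3 ^ q) ≤ m * δ := by
    have := (le_max_left _ _).trans hm.ge
    rwa [div_le_iff₀ hδ] at this
  have hm2 : 8 * (s : ℝ) * (2 + 3 ^ q) ≤ m * (ε * δ) := by
    have := (le_max_right _ _).trans hm.ge
    rwa [div_le_iff₀ (by positivity)] at this
  set S : Ω → Matrix (Fin m) (∀ k, Fin (n k)) ℝ := fun ω =>
    tsMat (fun k => H k ω) (fun k => V k ω) with hS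
  set b1 : Set Ω := {ω | 1 / 4 < frobSq (Uᵀ * ((S ω)ᵀ * S ω - 1) * U)} with hb1
  set b2 : Set Ω := {ω | ε / 4 * frobSq M < frobSq (Uᵀ * ((S ω)ᵀ * S ω - 1) * M)} with hb2
  have hB1 : μ.real b1 ≤ δ / 2 := by
    have h := amm_prob μ H V h3 h4 hmut U U (1 / 4) (by norm_num)
    change μ.real b1 * (1 / 4) ≤ _ at h
    rw [hUs] at h
    have h' : μ.real b1 * (1 / 4) * m ≤ 3 ^ q * (s * s) := by
      calc _ ≤ (1 / (m : ℝ) * 3 ^ q * (s * s)) * m := mul_le_mul_of_nonneg_right h hm0.le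
        _ = _ := by field_simp
    have h3s : (3 : ℝ) ^ q * (s * s) * 8 ≤ m * δ := by nlinarith [sq_nonneg (s : ℝ)]
    have : μ.real b1 * m ≤ δ / 2 * m := by linarith
    exact le_of_mul_le_mul_right this hm0
  have hB2 : μ.real b2 ≤ δ / 2 := by
    rcases (frobSq_nonneg M).eq_or_lt with h0 | hpos
    · have hM0 : M = 0 := frobSq_eq_zero M h0.symm
      have : b2 = ∅ := by
        ext ω
        simp [hb2, hM0, frobSq]
      rw [this]
      simpa using (half_pos hδ).le
    · have h := amm_prob μ H V h3 h4 hmut U M (ε / 4 * frobSq M) (by positivity)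
      change μ.real b2 * (ε / 4 * frobSq M) ≤ _ at h
      rw [hUs] at h
      have h' : μ.real b2 * m * (ε / 4 * frobSq M) ≤ 3 ^ q * s * frobSq M := by
        calc _ = (μ.real b2 * (ε / 4 * frobSq M)) * m := by ring
          _ ≤ (1 / (m : ℝ) * 3 ^ q * (s * frobSq M)) * m := mul_le_mul_of_nonneg_right h hm0.le
          _ = _ := by field_simp
      have h3s : (3 : ℝ) ^ q * s * 8 ≤ m * (ε * δ) := by nlinarith
      have h3s' := mul_le_mul_of_nonneg_right h3s hpos.le
      have : μ.real b2 * (m * (ε / 4 * frobSq M)) ≤ δ / 2 * (m * (ε / 4 * frobSq M)) := by linarith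
      exact le_of_mul_le_mul_right this (by positivity)
  set good : Set Ω := {ω |
      let S := tsMat (fun k => H k ω) (fun k => V k ω)
      ∀ Y : Matrix (Fin s) (Fin nc) ℝ,
        (∀ X, frobSq (S * P * Y - S * B) ≤ frobSq (S * P * X - S * B)) →
          frobSq (P * Y - B) ≤ (1 + ε) * frobSq M} with hgood
  change 1 - δ ≤ μ.real good
  have hcover : (Set.univ : Set Ω) ⊆ good ∪ (b1 ∪ b2) := by
    intro ω _
    by_cases h1 : ω ∈ b1
    · exact Or.inr (Or.inl h1)
    by_cases h2 : ω ∈ b2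
    · exact Or.inr (Or.inr h2)
    left
    intro Y hY
    exact det_part _ P U R R' hU hPU hUP B Xopt Y hXopt hY ε (not_lt.mp h1) (not_lt.mp h2)
  have hun : (1 : ℝ) ≤ μ.real (good ∪ (b1 ∪ b2)) := by
    have := measureReal_mono (μ := μ) hcover (measure_ne_top _ _)
    simpa using this
  have u1 := measureReal_union_le (μ := μ) good (b1 ∪ b2)
  have u2 := measureReal_union_le (μ := μ) b1 b2
  linarith
end
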